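/- Let d(l) denote the number of divisors of l and suppose the Salié sum bound |S_χ(n,n;l)| ≤ d(l) l^{1/2} gcd(n,l)^{1/2} holds for odd l, and the generalized Kloosterman sum bound |H_c(n,n)| ≤ 2^{ν+2}|S_χ(n',n';l)| for c = 2^ν l with l odd. Then for k → ∞ and a fundamental discriminant D, the sum Σ_{1 ≤ c ≤ 100|D|/k} c^{−1} |H_c(|D|,|D|)| · |J_{k−1/2}(π|D|/c)| ≪ (1 + √|D|/k) (k|D|)^ε, using the bound J_ν(x) ≪ ν^{−1/4}(|x−ν| + ν^{1/3})^{−1/4} for x ≫ ν. -/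

import Mathlib

open Finset

/-!
Write `c = 2 ^ ν * l` with `l` odd, and `q = 2 ^ ν * gcd(n, l)`. The Salié bound says that
`c⁻¹ |H_c| ≤ 4 d(c) √(q / c)`, and `q` is a divisor both of `c` and of `2 ^ ⌊log₂ N⌋ * n`, so it
takes only `(N n) ^ o(1)` values. For a fixed `q` put `c = q m`: what remains is a sum of
`m ^ (-1/2) J_κ(y κ / m)` with `y = x / (q κ)`. The Bessel bound turns the general term into
`κ ^ (-1/2) m ^ (-1/4) |m - y| ^ (-1/4)`, which by AM-GM is at most the mean of `(κ m) ^ (-1/2)` and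
`(κ |m - y|) ^ (-1/2)`. Sums of inverse square roots of distinct positive integers are largest over
an initial segment, so all this contributes `O(√(N / κ))`; only the integer `m` nearest to `y` has
to be estimated trivially, by `1`.
-/

section DivisorBound

theorem add_one_le_div_mul_pow {b : ℝ} (hb : 1 < b) (e : ℕ) :
    (e : ℝ) + 1 ≤ b / (b - 1) * b ^ e := by
  have hb' : 0 < b - 1 := sub_pos.2 hb
  have bernoulli : 1 + e * (b - 1) ≤ b ^ e := by
    simpa using one_add_mul_le_pow (by linarith : -2 ≤ b - 1) e
  calc (e : ℝ) + 1 ≤ b / (b - 1) * (1 + e * (b - 1)) := by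
        rw [div_mul_eq_mul_div, le_div_iff₀ hb']
        nlinarith [mul_nonneg (Nat.cast_nonneg (α := ℝ) e) (sq_nonneg (b - 1))]
    _ ≤ b / (b - 1) * b ^ e := by gcongr

theorem add_one_le_pow {b : ℝ} (hb : 2 ≤ b) (e : ℕ) : (e : ℝ) + 1 ≤ b ^ e :=
  calc (e : ℝ) + 1 ≤ 2 ^ e := by exact_mod_cast Nat.lt_two_pow_self
    _ ≤ b ^ e := by gcongr

theorem prod_primeFactors_rpow_pow_factorization {n : ℕ} (hn : n ≠ 0) (δ : ℝ) :
    ∏ p ∈ n.primeFactors, ((p : ℝ) ^ δ) ^ n.factorization p = (n : ℝ) ^ δ := by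
  conv_rhs => rw [← Nat.prod_factorization_pow_eq_self hn]
  rw [Nat.prod_factorization_eq_prod_primeFactors, Nat.cast_prod,
    ← Real.finsetProd_rpow _ _ fun _ _ => by positivity]
  refine prod_congr rfl fun p _ => ?_
  rw [Nat.cast_pow, Real.rpow_pow_comm p.cast_nonneg]

/-- The primes with `p ^ δ < 2`, finitely many, each cost a constant factor; the others cost
nothing. -/
theorem exists_card_divisors_le_mul_rpow {δ : ℝ} (hδ : 0 < δ) :
    ∃ C : ℝ, 0 < C ∧ ∀ n : ℕ, n ≠ 0 → (#n.divisors : ℝ) ≤ C * (n : ℝ) ^ δ := by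
  have two_rpow_gt : 1 < (2 : ℝ) ^ δ := Real.one_lt_rpow one_lt_two hδ
  set K : ℝ := (2 : ℝ) ^ δ / ((2 : ℝ) ^ δ - 1)
  have one_le_K : 1 ≤ K := by
    rw [one_le_div (sub_pos.2 two_rpow_gt)]
    linarith
  set P : ℕ := ⌈(2 : ℝ) ^ δ⁻¹⌉₊
  have local_bound (p e : ℕ) (hp : 2 ≤ p) :
      (e : ℝ) + 1 ≤ (if p < P then K else 1) * ((p : ℝ) ^ δ) ^ e := by
    split_ifs with hpP
    · refine (add_one_le_div_mul_pow two_rpow_gt e).trans ?_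
      gcongr
      exact_mod_cast hp
    · rw [one_mul]
      refine add_one_le_pow ((Real.rpow_inv_le_iff_of_pos two_pos.le p.cast_nonneg hδ).1 ?_) e
      exact (Nat.le_ceil _).trans (mod_cast not_lt.1 hpP)
  refine ⟨K ^ P, by positivity, fun n hn => ?_⟩
  have small_primes : ∏ p ∈ n.primeFactors, (if p < P then K else 1) ≤ K ^ P := by
    rw [← prod_filter, prod_const]
    refine pow_le_pow_right₀ one_le_K ?_
    simpa using card_le_card fun p hp => mem_range.2 (mem_filter.1 hp).2
  calc (#n.divisors : ℝ) = ∏ p ∈ n.primeFactors, ((n.factorization p : ℝ) + 1) := by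
        rw [Nat.card_divisors hn]
        push_cast
        rfl
    _ ≤ ∏ p ∈ n.primeFactors, ((if p < P then K else 1) * ((p : ℝ) ^ δ) ^ n.factorization p) :=
        prod_le_prod (fun _ _ => by positivity) fun p hp =>
          local_bound p _ (Nat.prime_of_mem_primeFactors hp).two_le
    _ = (∏ p ∈ n.primeFactors, (if p < P then K else 1)) * (n : ℝ) ^ δ := by
        rw [prod_mul_distrib, prod_primeFactors_rpow_pow_factorization hn]
    _ ≤ K ^ P * (n : ℝ) ^ δ := by gcongr

end DivisorBound

section InverseSquareRoots

theorem inv_sqrt_add_one_le {t : ℝ} (ht : 0 ≤ t) : (√(t + 1))⁻¹ ≤ 2 * √(t + 1) - 2 * √t := by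
  rw [inv_le_iff_one_le_mul₀ (by positivity)]
  nlinarith [sq_nonneg (√(t + 1) - √t), Real.sq_sqrt ht, Real.sq_sqrt (by positivity : 0 ≤ t + 1)]

theorem sum_inv_sqrt_le {s : Finset ℕ} (hs : 0 ∉ s) : ∑ j ∈ s, (√(j : ℝ))⁻¹ ≤ 2 * √(#s : ℝ) := by
  induction s using Finset.induction_on_max with
  | empty => simp
  | insert a s lt_a ih =>
    have a_notMem : a ∉ s := fun h => (lt_a a h).false
    have card_lt : #s + 1 ≤ a := by
      have : s ⊆ Ioo 0 a := fun j hj => mem_Ioo.2 ⟨Nat.pos_of_ne_zero (by grind), lt_a j hj⟩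
      have := card_le_card this
      rw [Nat.card_Ioo] at this
      grind
    have last_term : (√(a : ℝ))⁻¹ ≤ (√((#s : ℝ) + 1))⁻¹ := by
      gcongr
      exact_mod_cast card_lt
    rw [sum_insert a_notMem, card_insert_of_notMem a_notMem]
    push_cast
    linarith [ih (by grind), inv_sqrt_add_one_le (Nat.cast_nonneg (α := ℝ) #s)]

theorem sum_inv_sqrt_le_of_injOn {ι : Type*} {s : Finset ι} {f : ι → ℕ} (hf : Set.InjOn f s) :
    ∑ i ∈ s, (√(f i : ℝ))⁻¹ ≤ 2 * √(#s : ℝ) :=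
  calc ∑ i ∈ s, (√(f i : ℝ))⁻¹ = ∑ j ∈ (s.image f).erase 0, (√(j : ℝ))⁻¹ := by
        rw [sum_erase _ (by simp), sum_image hf]
    _ ≤ 2 * √(#((s.image f).erase 0) : ℝ) := sum_inv_sqrt_le (by simp)
    _ ≤ 2 * √(#s : ℝ) := by
        gcongr
        exact card_erase_le.trans card_image_le

theorem sum_inv_sqrt_abs_sub_le (s : Finset ℕ) (n : ℤ) :
    ∑ m ∈ s, (√|(m : ℝ) - n|)⁻¹ ≤ 4 * √(#s : ℝ) := by
  have cast_natAbs (m : ℕ) : |(m : ℝ) - n| = ((m - n : ℤ).natAbs : ℝ) := by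
    push_cast [Nat.cast_natAbs]
    rfl
  have sum_filter_le (p : ℕ → Prop) [DecidablePred p]
      (hp : Set.InjOn (fun m : ℕ => (m - n : ℤ).natAbs) (s.filter p)) :
      ∑ m ∈ s with p m, (√|(m : ℝ) - n|)⁻¹ ≤ 2 * √(#s : ℝ) := by
    simp only [cast_natAbs]
    refine (sum_inv_sqrt_le_of_injOn hp).trans ?_
    gcongr
    exact filter_subset p s
  rw [← sum_filter_add_sum_filter_not s (fun m : ℕ => (m : ℤ) < n)]
  have left := sum_filter_le (fun m => (m : ℤ) < n) fun i hi j hj hij => by grind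
  have right := sum_filter_le (fun m => ¬(m : ℤ) < n) fun i hi j hj hij => by grind
  linarith

end InverseSquareRoots

section BesselMajorant

/-- The majorant `κ^{-1/4} (|x - κ| + κ^{1/3})^{-1/4}` of the Bessel function `J_κ(x)`, which is
of the right order in the transition range `x ≈ κ`. -/
noncomputable def besselMajorant (κ x : ℝ) : ℝ :=
  κ ^ (-(1 / 4 : ℝ)) * (|x - κ| + κ ^ ((1 : ℝ) / 3)) ^ (-(1 / 4 : ℝ))

variable {κ : ℝ}

theorem besselMajorant_pos (hκ : 0 < κ) (x : ℝ) : 0 < besselMajorant κ x := by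
  unfold besselMajorant
  positivity

theorem besselMajorant_le_one (hκ : 1 ≤ κ) (x : ℝ) : besselMajorant κ x ≤ 1 := by
  have one_le : 1 ≤ |x - κ| + κ ^ ((1 : ℝ) / 3) :=
    le_add_of_nonneg_of_le (abs_nonneg _) (Real.one_le_rpow hκ (by norm_num))
  exact mul_le_one₀ (Real.rpow_le_one_of_one_le_of_nonpos hκ (by norm_num)) (by positivity)
    (Real.rpow_le_one_of_one_le_of_nonpos one_le (by norm_num))

theorem besselMajorant_le_of_ne {x : ℝ} (hκ : 0 ≤ κ) (hx : x ≠ κ) :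
    besselMajorant κ x ≤ κ ^ (-(1 / 4 : ℝ)) * |x - κ| ^ (-(1 / 4 : ℝ)) := by
  refine mul_le_mul_of_nonneg_left ?_ (by positivity)
  refine Real.rpow_le_rpow_of_nonpos (abs_pos.2 (sub_ne_zero.2 hx)) ?_ (by norm_num)
  exact le_add_of_nonneg_right (by positivity)

theorem rpow_neg_one_div_four_sq {y : ℝ} (hy : 0 ≤ y) : (y ^ (-(1 / 4 : ℝ))) ^ 2 = (√y)⁻¹ := by
  rw [← Real.rpow_mul_natCast hy, Real.sqrt_eq_rpow, ← Real.rpow_neg hy]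
  norm_num

theorem inv_sqrt_mul_besselMajorant_div_le {x m : ℝ} (hκ : 0 < κ) (hm : 0 < m)
    (hne : m ≠ x / κ) :
    (√m)⁻¹ * besselMajorant κ (x / m) ≤ (√κ)⁻¹ * (((√m)⁻¹ + (√|m - x / κ|)⁻¹) / 2) := by
  have dist_eq : |x / m - κ| = κ * |m - x / κ| / m := by
    rw [show x / m - κ = -(κ * (m - x / κ) / m) by field_simp; ring, abs_neg, abs_div, abs_mul,
      abs_of_pos hκ, abs_of_pos hm]
  have arg_ne : x / m ≠ κ := fun h => hne (by rw [eq_div_iff hκ.ne', ← h]; field_simp)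
  set t := |m - x / κ|
  have ht : 0 ≤ t := abs_nonneg _
  set u := m ^ (-(1 / 4 : ℝ)) with hu
  set v := t ^ (-(1 / 4 : ℝ)) with hv
  set w := κ ^ (-(1 / 4 : ℝ)) with hw
  have hu0 : 0 < u := by positivity
  have majorant_le : besselMajorant κ (x / m) ≤ w * (w * v / u) := by
    refine (besselMajorant_le_of_ne hκ.le arg_ne).trans_eq ?_
    rw [dist_eq, Real.div_rpow (by positivity) hm.le, Real.mul_rpow hκ.le ht]
  rw [← rpow_neg_one_div_four_sq hm.le, ← rpow_neg_one_div_four_sq ht,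
    ← rpow_neg_one_div_four_sq hκ.le, ← hu, ← hv, ← hw]
  calc u ^ 2 * besselMajorant κ (x / m) ≤ u ^ 2 * (w * (w * v / u)) := by gcongr
    _ = w ^ 2 * (u * v) := by field_simp
    _ ≤ w ^ 2 * ((u ^ 2 + v ^ 2) / 2) := by
        gcongr
        linarith [two_mul_le_add_sq u v]

theorem inv_sqrt_abs_sub_le_inv_sqrt_abs_sub_round {y : ℝ} {m : ℤ} (hm : m ≠ round y) :
    (√|m - y|)⁻¹ ≤ 3 / 2 * (√|(m : ℝ) - round y|)⁻¹ := by
  have sub_round_le : |(m : ℝ) - round y| ≤ 2 * |m - y| := by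
    have := abs_sub_le (m : ℝ) y (round y)
    have := round_le y m
    rw [abs_sub_comm y m] at this
    linarith
  have hpos : 0 < |(m : ℝ) - round y| := abs_pos.2 (sub_ne_zero.2 (mod_cast hm))
  rw [show (3 / 2 : ℝ) * (√|(m : ℝ) - round y|)⁻¹ = (√|(m : ℝ) - round y| / (3 / 2))⁻¹ by
    field_simp]
  refine inv_anti₀ (by positivity) (Real.le_sqrt_of_sq_le ?_)
  rw [div_pow, Real.sq_sqrt hpos.le]
  norm_num
  linarith

theorem inv_sqrt_mul_besselMajorant_natCast_le (hκ : 1 ≤ κ) (x : ℝ) (m : ℕ) :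
    (√(m : ℝ))⁻¹ * besselMajorant κ (x / m) ≤ (if (m : ℤ) = round (x / κ) then 1 else 0) +
      (√κ)⁻¹ * (((√(m : ℝ))⁻¹ + 3 / 2 * (√|(m : ℝ) - round (x / κ)|)⁻¹) / 2) := by
  have hκ0 : 0 < κ := one_pos.trans_le hκ
  rcases Nat.eq_zero_or_pos m with rfl | hm
  · rw [Nat.cast_zero, Real.sqrt_zero, inv_zero, zero_mul]
    positivity
  have hm' : (1 : ℝ) ≤ m := mod_cast hm
  split_ifs with nearest
  · refine le_add_of_le_of_nonneg ?_ (by positivity)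
    exact mul_le_one₀ (inv_le_one_of_one_le₀ (Real.one_le_sqrt.2 hm'))
      (besselMajorant_pos hκ0 _).le (besselMajorant_le_one hκ _)
  · have hne : (m : ℝ) ≠ x / κ := fun h => nearest (by rw [← h, round_natCast])
    rw [zero_add]
    refine (inv_sqrt_mul_besselMajorant_div_le hκ0 (by positivity) hne).trans ?_
    gcongr
    exact_mod_cast inv_sqrt_abs_sub_le_inv_sqrt_abs_sub_round nearest

theorem sum_inv_sqrt_mul_besselMajorant_le (hκ : 1 ≤ κ) (x : ℝ) (s : Finset ℕ) :
    ∑ m ∈ s, (√(m : ℝ))⁻¹ * besselMajorant κ (x / m) ≤ 1 + 4 * √(#s / κ) := by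
  set n : ℤ := round (x / κ)
  have nearest : ∑ m ∈ s, (if (m : ℤ) = n then (1 : ℝ) else 0) ≤ 1 := by
    rw [sum_boole]
    exact_mod_cast card_le_one.2 fun i hi j hj => by grind
  calc ∑ m ∈ s, (√(m : ℝ))⁻¹ * besselMajorant κ (x / m)
      ≤ ∑ m ∈ s, ((if (m : ℤ) = n then (1 : ℝ) else 0) +
          (√κ)⁻¹ * (((√(m : ℝ))⁻¹ + 3 / 2 * (√|(m : ℝ) - n|)⁻¹) / 2)) :=
        sum_le_sum fun m _ => inv_sqrt_mul_besselMajorant_natCast_le hκ x m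
    _ = ∑ m ∈ s, (if (m : ℤ) = n then (1 : ℝ) else 0) + (√κ)⁻¹ *
          ((∑ m ∈ s, (√(m : ℝ))⁻¹ + 3 / 2 * ∑ m ∈ s, (√|(m : ℝ) - n|)⁻¹) / 2) := by
        rw [sum_add_distrib, ← mul_sum, ← sum_div, sum_add_distrib, ← mul_sum]
    _ ≤ 1 + (√κ)⁻¹ * ((2 * √(#s : ℝ) + 3 / 2 * (4 * √(#s : ℝ))) / 2) := by
        gcongr
        · exact sum_inv_sqrt_le_of_injOn (f := id) Function.injective_id.injOn
        · exact sum_inv_sqrt_abs_sub_le s n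
    _ = 1 + 4 * √(#s / κ) := by
        rw [Real.sqrt_div (Nat.cast_nonneg _)]
        ring

theorem sum_sqrt_div_mul_besselMajorant_le_of_dvd (hκ : 1 ≤ κ) (x : ℝ) {q : ℕ} (hq : q ≠ 0)
    {s : Finset ℕ} (hs : ∀ c ∈ s, q ∣ c) :
    ∑ c ∈ s, √(q / c : ℝ) * besselMajorant κ (x / c) ≤ 1 + 4 * √(#s / κ) := by
  have hq' : (q : ℝ) ≠ 0 := mod_cast hq
  have injOn_div : Set.InjOn (· / q) (s : Set ℕ) := fun c hc c' hc' h =>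
    (Nat.div_left_inj (hs c hc) (hs c' hc')).1 h
  calc ∑ c ∈ s, √(q / c : ℝ) * besselMajorant κ (x / c)
      = ∑ c ∈ s, (√((c / q : ℕ) : ℝ))⁻¹ * besselMajorant κ (x / q / (c / q : ℕ)) := by
        refine sum_congr rfl fun c hc => ?_
        rw [Nat.cast_div_charZero (hs c hc), div_div_div_cancel_right₀ hq', ← Real.sqrt_inv,
          inv_div]
    _ = ∑ m ∈ s.image (· / q), (√(m : ℝ))⁻¹ * besselMajorant κ (x / q / m) :=
        by rw [sum_image injOn_div]
    _ ≤ 1 + 4 * √(#s / κ) := by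
        simpa only [card_image_of_injOn injOn_div] using
          sum_inv_sqrt_mul_besselMajorant_le hκ (x / q) (s.image (· / q))

theorem sum_sqrt_div_mul_besselMajorant_le (hκ : 1 ≤ κ) (x : ℝ) {s T : Finset ℕ} {q : ℕ → ℕ}
    (q_dvd : ∀ c ∈ s, q c ∣ c) (q_mem : ∀ c ∈ s, q c ∈ T) (hT : 0 ∉ T) :
    ∑ c ∈ s, √(q c / c : ℝ) * besselMajorant κ (x / c) ≤ #T * (1 + 4 * √(#s / κ)) := by
  rw [← sum_fiberwise_of_maps_to q_mem, ← nsmul_eq_mul]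
  refine sum_le_card_nsmul _ _ _ fun d hd => ?_
  calc ∑ c ∈ s with q c = d, √(q c / c : ℝ) * besselMajorant κ (x / c)
      = ∑ c ∈ s with q c = d, √(d / c : ℝ) * besselMajorant κ (x / c) :=
        sum_congr rfl fun c hc => by rw [(mem_filter.1 hc).2]
    _ ≤ 1 + 4 * √(#{c ∈ s | q c = d} / κ) :=
        sum_sqrt_div_mul_besselMajorant_le_of_dvd hκ x (ne_of_mem_of_not_mem hd hT) (by grind)
    _ ≤ 1 + 4 * √(#s / κ) := by
        gcongr
        exact filter_subset _ _

end BesselMajorant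

section SalieBound

/-- The bound `H_c ≤ 2^{ν+2} d(l) l^{1/2} gcd(n, l)^{1/2}` for `c = 2^ν l` with `l` odd, which the
Salié sums provide for `H_c = |H_c(n, n)|`. -/
def SalieBound (n : ℕ) (H : ℕ → ℝ) : Prop :=
  ∀ ν l : ℕ, Odd l → H (2 ^ ν * l) ≤ 2 ^ (ν + 2) * (#l.divisors : ℝ) * √l * √(n.gcd l)

/-- The number `2^ν gcd(n, l)` attached to `c = 2^ν l` with `l` odd: up to divisor functions, the
Salié bound says that `c⁻¹ H_c` is at most `√(salieDivisor n c / c)`. -/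
def salieDivisor (n c : ℕ) : ℕ := ordProj[2] c * n.gcd (ordCompl[2] c)

theorem salieDivisor_dvd (n c : ℕ) : salieDivisor n c ∣ c := by
  conv_rhs => rw [← Nat.ordProj_mul_ordCompl_eq_self c 2]
  exact mul_dvd_mul_left _ (Nat.gcd_dvd_right _ _)

theorem salieDivisor_dvd_two_pow_log_mul {c N : ℕ} (n : ℕ) (hc : c ≠ 0) (hcN : c ≤ N) :
    salieDivisor n c ∣ 2 ^ Nat.log 2 N * n := by
  refine mul_dvd_mul (pow_dvd_pow 2 ?_) (Nat.gcd_dvd_left _ _)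
  exact Nat.le_log_of_pow_le one_lt_two ((Nat.ordProj_le 2 hc).trans hcN)

theorem SalieBound.inv_mul_le {n : ℕ} {H : ℕ → ℝ} (hH : SalieBound n H) {c : ℕ} (hc : c ≠ 0) :
    (c : ℝ)⁻¹ * H c ≤ 4 * #c.divisors * √(salieDivisor n c / c) := by
  have odd_compl : Odd (ordCompl[2] c) :=
    Nat.coprime_two_left.1 (Nat.coprime_ordCompl Nat.prime_two hc)
  have c_eq : ordProj[2] c * ordCompl[2] c = c := Nat.ordProj_mul_ordCompl_eq_self c 2
  unfold salieDivisor
  generalize c.factorization 2 = ν at *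
  generalize c / 2 ^ ν = l at *
  subst c_eq
  have hl : (0 : ℝ) < l := mod_cast odd_compl.pos
  have sq_l : √(l : ℝ) ^ 2 = l := Real.sq_sqrt hl.le
  have quotient_eq : ((2 ^ ν * n.gcd l : ℕ) : ℝ) / (2 ^ ν * l : ℕ) = n.gcd l / l := by
    push_cast
    exact mul_div_mul_left _ _ (by positivity)
  calc ((2 ^ ν * l : ℕ) : ℝ)⁻¹ * H (2 ^ ν * l)
      ≤ ((2 ^ ν * l : ℕ) : ℝ)⁻¹ * (2 ^ (ν + 2) * (#l.divisors : ℝ) * √l * √(n.gcd l)) := by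
        gcongr
        exact hH ν l odd_compl
    _ = 4 * #l.divisors * √(n.gcd l / l) := by
        rw [Real.sqrt_div (Nat.cast_nonneg _)]
        push_cast
        field_simp
        rw [sq_l]
        ring
    _ ≤ 4 * #(2 ^ ν * l).divisors * √((2 ^ ν * n.gcd l : ℕ) / (2 ^ ν * l : ℕ)) := by
        rw [quotient_eq]
        gcongr
        exact dvd_mul_left l _

theorem SalieBound.sum_mul_abs_le {n N : ℕ} {H : ℕ → ℝ} (hH : SalieBound n H) (hn : n ≠ 0)
    {κ x A Δ : ℝ} {J : ℝ → ℝ} (hκ : 1 ≤ κ) (hA : 0 ≤ A)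
    (hJ : ∀ c ∈ Icc 1 N, |J (x / c)| ≤ A * besselMajorant κ (x / c))
    (hΔ : ∀ c ∈ Icc 1 N, (#c.divisors : ℝ) ≤ Δ) (hΔ0 : 0 ≤ Δ) :
    ∑ c ∈ Icc 1 N, (c : ℝ)⁻¹ * H c * |J (x / c)| ≤
      4 * A * Δ * (#(2 ^ Nat.log 2 N * n).divisors * (1 + 4 * √(N / κ))) := by
  have term_le : ∀ c ∈ Icc 1 N, (c : ℝ)⁻¹ * H c * |J (x / c)| ≤
      4 * A * Δ * (√(salieDivisor n c / c) * besselMajorant κ (x / c)) := fun c hc =>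
    calc (c : ℝ)⁻¹ * H c * |J (x / c)|
        ≤ 4 * Δ * √(salieDivisor n c / c) * (A * besselMajorant κ (x / c)) := by
          have := hH.inv_mul_le (c := c) (by grind)
          refine mul_le_mul (this.trans ?_) (hJ c hc) (abs_nonneg _) (by positivity)
          gcongr
          exact hΔ c hc
      _ = 4 * A * Δ * (√(salieDivisor n c / c) * besselMajorant κ (x / c)) := by ring
  refine (sum_le_sum term_le).trans ?_
  rw [← mul_sum]
  refine mul_le_mul_of_nonneg_left ?_ (by positivity)
  have divisor_mem : ∀ c ∈ Icc 1 N, salieDivisor n c ∈ (2 ^ Nat.log 2 N * n).divisors :=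
    fun c hc => Nat.mem_divisors.2
      ⟨salieDivisor_dvd_two_pow_log_mul n (by grind) (mem_Icc.1 hc).2, by positivity⟩
  simpa only [Nat.card_Icc, Nat.add_sub_cancel] using
    sum_sqrt_div_mul_besselMajorant_le hκ x (fun c _ => salieDivisor_dvd n c) divisor_mem (by simp)

end SalieBound

/-- The dyadic parts `2 ^ ν` of the moduli `c ≤ N` divide `2 ^ Nat.log 2 N`, which is at most
`N + 1`. -/
theorem exists_card_divisors_mul_card_divisors_two_pow_log_mul_le {B ε : ℝ} (hB : 0 ≤ B)
    (hε : 0 < ε) :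
    ∃ C : ℝ, 0 < C ∧ ∀ n N : ℕ, n ≠ 0 → N ≤ B * n → ∃ Δ : ℝ, 0 ≤ Δ ∧
      (∀ c ∈ Icc 1 N, (#c.divisors : ℝ) ≤ Δ) ∧
      Δ * #(2 ^ Nat.log 2 N * n).divisors ≤ C * (n : ℝ) ^ ε := by
  obtain ⟨K, hK, card_le⟩ := exists_card_divisors_le_mul_rpow (by positivity : 0 < ε / 3)
  refine ⟨K ^ 2 * ((B + 1) ^ (ε / 3)) ^ 2, by positivity, fun n N hn hN => ?_⟩
  have one_le_n : (1 : ℝ) ≤ n := mod_cast Nat.one_le_iff_ne_zero.2 hn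
  have N_add_one_le : (N : ℝ) + 1 ≤ (B + 1) * n := by linarith
  refine ⟨K * ((B + 1) * n) ^ (ε / 3), by positivity, fun c hc => ?_, ?_⟩
  · have c_le : (c : ℝ) ≤ N := mod_cast (mem_Icc.1 hc).2
    refine (card_le c (by grind)).trans ?_
    gcongr
    linarith
  have two_pow_le : (2 : ℝ) ^ Nat.log 2 N ≤ (B + 1) * n :=
    le_trans (mod_cast Nat.pow_log_le_add_one 2 N) N_add_one_le
  calc K * ((B + 1) * n) ^ (ε / 3) * #(2 ^ Nat.log 2 N * n).divisors
      ≤ K * ((B + 1) * n) ^ (ε / 3) * (K * ((B + 1) * n * n) ^ (ε / 3)) := by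
        gcongr
        refine (card_le _ (by positivity)).trans ?_
        push_cast
        gcongr
    _ = K ^ 2 * ((B + 1) ^ (ε / 3)) ^ 2 * ((n : ℝ) ^ (ε / 3)) ^ 3 := by
        rw [Real.mul_rpow (x := (B + 1) * n) (by positivity) n.cast_nonneg,
          Real.mul_rpow (x := B + 1) (by positivity) n.cast_nonneg]
        ring
    _ = K ^ 2 * ((B + 1) ^ (ε / 3)) ^ 2 * (n : ℝ) ^ ε := by
        rw [← Real.rpow_mul_natCast n.cast_nonneg, Nat.cast_ofNat, div_mul_cancel₀ _ three_ne_zero]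

theorem one_add_four_mul_sqrt_div_le {k B a N : ℝ} (hk : 3 / 2 ≤ k) (hB : 0 ≤ B) (ha : 0 ≤ a)
    (hN : N ≤ B * a / k) :
    1 + 4 * √(N / (k - 1 / 2)) ≤ (1 + 5 * √B) * (1 + √a / k) := by
  have : 0 < k := by linarith
  have sqrt_le : √(N / (k - 1 / 2)) ≤ 5 / 4 * (√B * (√a / k)) := by
    refine Real.sqrt_le_iff.2 ⟨by positivity, ?_⟩
    calc N / (k - 1 / 2) ≤ B * a / k / (k * (2 / 3)) := by gcongr; linarith
      _ = 3 / 2 * (B * (a / k ^ 2)) := by field_simp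
      _ ≤ (5 / 4) ^ 2 * (B * (a / k ^ 2)) := by gcongr; norm_num
      _ = (5 / 4 * (√B * (√a / k))) ^ 2 := by
          rw [mul_pow, mul_pow, div_pow (√a), Real.sq_sqrt hB, Real.sq_sqrt ha]
  have : 0 ≤ √a / k := by positivity
  linarith [Real.sqrt_nonneg B]

theorem sub_half_div_le_pi_mul_div {k B a c : ℝ} (hB : 0 < B) (hk : 0 < k) (hc : 0 < c)
    (hcB : c ≤ B * a / k) : (k - 1 / 2) / B ≤ Real.pi * a / c := by
  have mul_le : c * k ≤ B * a := (le_div_iff₀ hk).1 hcB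
  have ha : 0 < a := pos_of_mul_pos_right ((mul_pos hc hk).trans_le mul_le) hB.le
  rw [div_le_div_iff₀ hB hc]
  nlinarith [Real.pi_gt_three, mul_pos hB ha]

theorem kohnen_sengupta_sum_bound_general {B ε : ℝ} (hB : 0 < B) (hε : 0 < ε) :
    ∃ C : ℝ, 0 < C ∧ ∀ (k : ℝ) (n : ℕ) (H : ℕ → ℝ) (J : ℝ → ℝ) (A : ℝ),
      3 / 2 ≤ k → n ≠ 0 → SalieBound n H →
      (∀ x : ℝ, (k - 1 / 2) / B ≤ x → |J x| ≤ A * besselMajorant (k - 1 / 2) x) →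
      ∑ c ∈ Icc 1 ⌊B * n / k⌋₊, (c : ℝ)⁻¹ * H c * |J (Real.pi * n / c)| ≤
        C * A * (1 + √(n : ℝ) / k) * (n : ℝ) ^ ε := by
  obtain ⟨K, hK, exists_divisor_bound⟩ :=
    exists_card_divisors_mul_card_divisors_two_pow_log_mul_le hB.le hε
  refine ⟨4 * K * (1 + 5 * √B), by positivity, fun k n H J A hk hn hH hJ => ?_⟩
  have hA : 0 ≤ A := nonneg_of_mul_nonneg_left ((abs_nonneg _).trans (hJ _ le_rfl))
    (besselMajorant_pos (by linarith) _)
  set N : ℕ := ⌊B * n / k⌋₊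
  have hN : (N : ℝ) ≤ B * n / k := Nat.floor_le (by positivity)
  obtain ⟨Δ, hΔ, card_divisors_le, mul_card_divisors_le⟩ := exists_divisor_bound n N hn
    (hN.trans (div_le_self (by positivity) (by linarith)))
  have bessel_le : ∀ c ∈ Icc 1 N, |J (Real.pi * n / c)| ≤
      A * besselMajorant (k - 1 / 2) (Real.pi * n / c) := fun c hc =>
    hJ _ (sub_half_div_le_pi_mul_div hB (by linarith) (mod_cast (mem_Icc.1 hc).1)
      (le_trans (mod_cast (mem_Icc.1 hc).2) hN))
  calc ∑ c ∈ Icc 1 N, (c : ℝ)⁻¹ * H c * |J (Real.pi * n / c)|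
      ≤ 4 * A * Δ * (#(2 ^ Nat.log 2 N * n).divisors * (1 + 4 * √(N / (k - 1 / 2)))) :=
        hH.sum_mul_abs_le hn (by linarith) hA bessel_le card_divisors_le hΔ
    _ = 4 * A * (Δ * #(2 ^ Nat.log 2 N * n).divisors) * (1 + 4 * √(N / (k - 1 / 2))) := by ring
    _ ≤ 4 * A * (K * (n : ℝ) ^ ε) * ((1 + 5 * √B) * (1 + √(n : ℝ) / k)) := by
        gcongr
        exact one_add_four_mul_sqrt_div_le hk hB.le n.cast_nonneg hN
    _ = 4 * K * (1 + 5 * √B) * A * (1 + √(n : ℝ) / k) * (n : ℝ) ^ ε := by ring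

/-- Trivial summation over `c` of the generalized Kloosterman sums `H_c(|D|,|D|)`
against the Bessel function `J_{k−1/2}(π|D|/c)`: under the Salié-sum bound
`|H_c| ≤ 2^{ν+2} d(l) √l gcd(|D|,l)^{1/2}` (for `c = 2^ν l`, `l` odd) and the Bessel
transition bound `J_ν(x) ≪ ν^{−1/4}(|x−ν|+ν^{1/3})^{−1/4}` for `x ≫ ν`, one has
`Σ_{c ≤ 100|D|/k} c⁻¹ |H_c| |J_{k−1/2}(π|D|/c)| ≪ (1 + √|D|/k)(k|D|)^ε`. -/
theorem kohnen_sengupta_sum_bound (ε : ℝ) (hε : 0 < ε) :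
    ∃ C : ℝ, 0 < C ∧
      ∀ (k : ℕ) (D : ℤ) (Hc : ℕ → ℂ) (J : ℝ → ℝ → ℝ) (CJ : ℝ),
        2 ≤ k → D ≠ 0 → 0 ≤ CJ →
        (∀ ν l : ℕ, Odd l →
          ‖Hc (2 ^ ν * l)‖
            ≤ 2 ^ (ν + 2) * (l.divisors.card : ℝ) * Real.sqrt l *
                Real.sqrt (Nat.gcd D.natAbs l)) →
        (∀ ν x : ℝ, 1 ≤ ν → ν / 100 ≤ x →
          |J ν x| ≤ CJ * ν ^ (-(1 / 4 : ℝ)) * (|x - ν| + ν ^ ((1 : ℝ) / 3)) ^ (-(1 / 4 : ℝ))) →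
        ∑ c ∈ Finset.Icc 1 (Nat.floor (100 * |(D : ℝ)| / k)),
            (c : ℝ)⁻¹ * ‖Hc c‖ * |J ((k : ℝ) - 1 / 2) (Real.pi * |(D : ℝ)| / c)|
          ≤ C * (CJ + 1) * (1 + Real.sqrt |(D : ℝ)| / k) * ((k : ℝ) * |(D : ℝ)|) ^ ε := by
  obtain ⟨C, hC, bound⟩ := kohnen_sengupta_sum_bound_general (B := 100) (by norm_num) hε
  refine ⟨C, hC, fun k D Hc J CJ hk hD hCJ hH hJ => ?_⟩
  have hk' : (2 : ℝ) ≤ k := mod_cast hk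
  rw [← Int.cast_abs, ← Nat.cast_natAbs]
  refine (bound k D.natAbs (‖Hc ·‖) (J (k - 1 / 2)) CJ (by linarith) (Int.natAbs_ne_zero.2 hD) hH
    fun x hx => (hJ _ x (by linarith) hx).trans_eq (mul_assoc _ _ _)).trans ?_
  gcongr
  · linarith
  · exact le_mul_of_one_le_left (by positivity) (by linarith)
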